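/- Assume m, n ≥ 7 and fix any σ* ∈ S_0. Then for every permutation σ of [n], the matrix P^[2]_σ lies in the ℝ-linear span of the set {P^[2]_τ : τ ∈ S_1 ∪ S_2} ∪ {P^[2]_{σ*}}. -/

import Mathlib

open Finset

/-- The matrix `P^[2]_σ`: entry at `((i,j),(k,l))` is `P_σ(i,j) · P_σ(k,l)`, where
`P_σ` is the permutation matrix of `σ`. -/
noncomputable def permMat2 {n : ℕ} (σ : Equiv.Perm (Fin n)) :
    (Fin n × Fin n) → (Fin n × Fin n) → ℝ :=
  fun p q => (if σ p.1 = p.2 then (1 : ℝ) else 0) * (if σ q.1 = q.2 then (1 : ℝ) else 0)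


/-- `Sk i j k`: the set of permutations `σ` such that `σ (i r) = j r` holds for exactly `k`
indices `r`. -/
def Sk {n m : ℕ} (i j : Fin m → Fin n) (k : ℕ) : Set (Equiv.Perm (Fin n)) :=
  {σ | (Finset.univ.filter (fun r : Fin m => σ (i r) = j r)).card = k}

open Equiv in
/-- the degree-two relation on a cube of disjoint moves -/
def Cube {α : Type} (f : Perm α → ℝ) : Prop :=
  ∀ σ g₁ g₂ g₃ : Perm α, g₁.Disjoint g₂ → g₁.Disjoint g₃ → g₂.Disjoint g₃ →
    f σ - f (σ * g₁) - f (σ * g₂) - f (σ * g₃) + f (σ * g₁ * g₂) + f (σ * g₁ * g₃)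
      + f (σ * g₂ * g₃) - f (σ * g₁ * g₂ * g₃) = 0

def fx {α : Type} [DecidableEq α] (M : Finset α) (σ : Equiv.Perm α) : Finset α :=
  M.filter (fun x => σ x = x)

section
variable {α : Type} [DecidableEq α]

lemma mem_fx {M : Finset α} {σ : Equiv.Perm α} {x : α} : x ∈ fx M σ ↔ x ∈ M ∧ σ x = x := by
  simp [fx]

lemma cube_aux (φ ψ : α → ℝ) (p r : α) (g₁ g₂ g₃ : Equiv.Perm α) (h12 : g₁.Disjoint g₂)
    (h13 : g₁.Disjoint g₃) (h23 : g₂.Disjoint g₃) :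
    φ p * ψ r - φ (g₁ p) * ψ (g₁ r) - φ (g₂ p) * ψ (g₂ r) - φ (g₃ p) * ψ (g₃ r)
      + φ (g₁ (g₂ p)) * ψ (g₁ (g₂ r)) + φ (g₁ (g₃ p)) * ψ (g₁ (g₃ r))
      + φ (g₂ (g₃ p)) * ψ (g₂ (g₃ r)) - φ (g₁ (g₂ (g₃ p))) * ψ (g₁ (g₂ (g₃ r))) = 0 := by
  have key : ∀ x, (g₁ x = x ∧ g₂ x = x) ∨ (g₁ x = x ∧ g₃ x = x) ∨ (g₂ x = x ∧ g₃ x = x) := by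
    intro x
    rcases h12 x with h | h <;> rcases h13 x with h' | h' <;> rcases h23 x with h'' | h'' <;> simp_all
  have c12 := fun x => Equiv.Perm.congr_fun h12.commute.eq x
  have c13 := fun x => Equiv.Perm.congr_fun h13.commute.eq x
  have c23 := fun x => Equiv.Perm.congr_fun h23.commute.eq x
  simp only [Equiv.Perm.mul_apply] at c12 c13 c23
  rcases key p with ⟨h1, h2⟩ | ⟨h1, h2⟩ | ⟨h1, h2⟩ <;>
  rcases key r with ⟨h3, h4⟩ | ⟨h3, h4⟩ | ⟨h3, h4⟩ <;>
  simp only [c12, c13, c23, h1, h2, h3, h4] <;> ring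

lemma cube_mono (p q r s : α) :
    Cube (fun σ : Equiv.Perm α => (if σ p = q then (1:ℝ) else 0) * (if σ r = s then (1:ℝ) else 0)) := by
  intro σ g₁ g₂ g₃ h12 h13 h23
  exact cube_aux (fun x => if σ x = q then (1:ℝ) else 0) (fun x => if σ x = s then (1:ℝ) else 0)
    p r g₁ g₂ g₃ h12 h13 h23

lemma cube_sum {ι : Type} (s : Finset ι) (f : ι → Equiv.Perm α → ℝ) (h : ∀ i ∈ s, Cube (f i)) :
    Cube (fun σ => ∑ i ∈ s, f i σ) := by
  intro σ g₁ g₂ g₃ h12 h13 h23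
  simp only [← Finset.sum_sub_distrib, ← Finset.sum_add_distrib]
  exact Finset.sum_eq_zero fun i hi => h i hi σ g₁ g₂ g₃ h12 h13 h23

lemma card_fx (M : Finset α) (σ : Equiv.Perm α) :
    ((fx M σ).card : ℝ) = ∑ x ∈ M, (if σ x = x then (1:ℝ) else 0) := by
  simp [fx]

lemma cube_card (M : Finset α) : Cube (fun σ : Equiv.Perm α => ((fx M σ).card : ℝ)) := by
  have := cube_sum M (fun x σ => (if σ x = x then (1:ℝ) else 0) * (if σ x = x then (1:ℝ) else 0))
    (fun x _ => cube_mono x x x x)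
  convert this using 2 with σ
  rw [card_fx]
  refine Finset.sum_congr rfl fun x _ => ?_
  split_ifs <;> simp

lemma cube_card2 (M : Finset α) :
    Cube (fun σ : Equiv.Perm α => ((fx M σ).card : ℝ) * ((fx M σ).card : ℝ)) := by
  have := cube_sum M _ (fun x _ => cube_sum M
    (fun y σ => (if σ x = x then (1:ℝ) else 0) * (if σ y = y then (1:ℝ) else 0))
    (fun y _ => cube_mono x x y y))
  convert this using 2 with σ
  rw [card_fx, Finset.sum_mul_sum]

/-- correction by the quadratic function of the number of fixed points -/
lemma cube_corr (M : Finset α) (f : Equiv.Perm α → ℝ) (hf : Cube f) (c : ℝ) :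
    Cube (fun σ => f σ - c * ((((fx M σ).card : ℝ) - 1) * (((fx M σ).card : ℝ) - 2) / 2)) := by
  intro σ g₁ g₂ g₃ h12 h13 h23
  have h1 := hf σ g₁ g₂ g₃ h12 h13 h23
  have h2 := cube_card M σ g₁ g₂ g₃ h12 h13 h23
  have h3 := cube_card2 M σ g₁ g₂ g₃ h12 h13 h23
  simp only at h2 h3 ⊢
  linear_combination h1 - c / 2 * h3 + 3 * c / 2 * h2

lemma fx_drop {M : Finset α} {σ : Equiv.Perm α} {a b : α} (ha : a ∈ fx M σ) (hb : b ∉ fx M σ) :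
    fx M (σ * Equiv.swap a b) = (fx M σ).erase a := by
  have hab : a ≠ b := by rintro rfl; exact hb ha
  have ha' := mem_fx.1 ha
  ext x
  rw [Finset.mem_erase, mem_fx, mem_fx, Equiv.Perm.mul_apply]
  by_cases h1 : x = a
  · subst h1
    have : σ b ≠ x := fun h => hab (σ.injective (ha'.2.trans h.symm))
    simp [this]
  by_cases h2 : x = b
  · subst h2
    rw [Equiv.swap_apply_right, ha'.2]
    have := mem_fx.not.1 hb
    tauto
  rw [Equiv.swap_apply_of_ne_of_ne h1 h2]
  tauto

lemma swap_disj {a b c d : α} (h1 : a ≠ c) (h2 : a ≠ d) (h3 : b ≠ c) (h4 : b ≠ d) :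
    (Equiv.swap a b).Disjoint (Equiv.swap c d) := by
  intro x
  by_cases ha : x = a
  · right; subst ha; exact Equiv.swap_apply_of_ne_of_ne h1 h2
  by_cases hb : x = b
  · right; subst hb; exact Equiv.swap_apply_of_ne_of_ne h3 h4
  left; exact Equiv.swap_apply_of_ne_of_ne ha hb

lemma perm_disj_swap {g : Equiv.Perm α} {a b : α} (ha : g a = a) (hb : g b = b) :
    g.Disjoint (Equiv.swap a b) := by
  intro x
  by_cases h1 : x = a
  · left; rw [h1, ha]
  by_cases h2 : x = b
  · left; rw [h2, hb]
  right; exact Equiv.swap_apply_of_ne_of_ne h1 h2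

variable [Fintype α]

lemma pick (S : Finset α) (h : S.card < Fintype.card α) : ∃ b, b ∉ S := by
  by_contra hc
  push Not at hc
  rw [Finset.eq_univ_iff_forall.2 hc, Finset.card_univ] at h
  exact lt_irrefl _ h

lemma agree {M : Finset α} {f : Equiv.Perm α → ℝ} (hf : Cube f)
    (h0 : ∀ σ, (fx M σ).card = 1 ∨ (fx M σ).card = 2 → f σ = 0)
    {A : Finset α} (hA : A.card = 3) {σ σ' : Equiv.Perm α} (h1 : fx M σ = A) (h2 : fx M σ' = A)
    {b c : α} (hbc : b ≠ c) (hb : b ∉ A) (hc : c ∉ A) (eb : σ b = σ' b) (ec : σ c = σ' c) :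
    f σ = f σ' := by
  obtain ⟨a, d, e, had, hae, hde, rfl⟩ := Finset.card_eq_three.1 hA
  set A : Finset α := {a, d, e} with hAdef
  have haA : a ∈ A := by simp [hAdef]
  have hdA : d ∈ A := by simp [hAdef]
  have hfixσ : ∀ x ∈ A, σ x = x := fun x hx => (mem_fx.1 (h1 ▸ hx)).2
  have hfixσ' : ∀ x ∈ A, σ' x = x := fun x hx => (mem_fx.1 (h2 ▸ hx)).2
  have hg : ∀ x, σ x = σ' x → (σ⁻¹ * σ') x = x := by
    intro x hx; rw [Equiv.Perm.mul_apply, ← hx]; simp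
  have hab : a ≠ b := by rintro rfl; exact hb haA
  have hac : a ≠ c := by rintro rfl; exact hc haA
  have hdb : d ≠ b := by rintro rfl; exact hb hdA
  have hdc : d ≠ c := by rintro rfl; exact hc hdA
  have C := hf σ (σ⁻¹ * σ') (Equiv.swap a b) (Equiv.swap d c)
    (perm_disj_swap (hg a (by rw [hfixσ a haA, hfixσ' a haA])) (hg b eb))
    (perm_disj_swap (hg d (by rw [hfixσ d hdA, hfixσ' d hdA])) (hg c ec))
    (swap_disj had hac hdb.symm hbc)
  have e1 : σ * (σ⁻¹ * σ') = σ' := by group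
  rw [e1] at C
  have Z : ∀ ρ : Equiv.Perm α, fx M ρ = A →
      f (ρ * Equiv.swap a b) = 0 ∧ f (ρ * Equiv.swap d c) = 0 ∧
      f (ρ * Equiv.swap a b * Equiv.swap d c) = 0 := by
    intro ρ hρ
    have k1 : fx M (ρ * Equiv.swap a b) = A.erase a := by
      rw [fx_drop (hρ ▸ haA) (hρ ▸ hb), hρ]
    have k2 : fx M (ρ * Equiv.swap d c) = A.erase d := by
      rw [fx_drop (hρ ▸ hdA) (hρ ▸ hc), hρ]
    have hd1 : d ∈ A.erase a := Finset.mem_erase.2 ⟨had.symm, hdA⟩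
    have k3 : fx M (ρ * Equiv.swap a b * Equiv.swap d c) = (A.erase a).erase d := by
      rw [fx_drop (k1 ▸ hd1) (k1 ▸ fun h => hc (Finset.mem_of_mem_erase h)), k1]
    have ca := Finset.card_erase_of_mem haA
    have cd := Finset.card_erase_of_mem hdA
    have cad := Finset.card_erase_of_mem hd1
    refine ⟨h0 _ (Or.inr ?_), h0 _ (Or.inr ?_), h0 _ (Or.inl ?_)⟩
    · rw [k1]; omega
    · rw [k2]; omega
    · rw [k3]; omega
  obtain ⟨z1, z2, z3⟩ := Z σ h1
  obtain ⟨w1, w2, w3⟩ := Z σ' h2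
  linarith

lemma swap_step {M : Finset α} {f : Equiv.Perm α → ℝ} (hf : Cube f)
    (hn : 7 ≤ Fintype.card α)
    (h0 : ∀ σ, (fx M σ).card = 1 ∨ (fx M σ).card = 2 → f σ = 0)
    {A : Finset α} (hA : A.card = 3) {σ : Equiv.Perm α} (h1 : fx M σ = A)
    {x y : α} (hx : x ∉ A) (hy : y ∉ A) (hx' : x ∈ M → σ y ≠ x) (hy' : y ∈ M → σ x ≠ y) :
    fx M (σ * Equiv.swap x y) = A ∧ f (σ * Equiv.swap x y) = f σ := by
  have hfx : fx M (σ * Equiv.swap x y) = A := by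
    subst h1
    ext z
    rw [mem_fx, mem_fx, Equiv.Perm.mul_apply]
    rw [mem_fx] at hx hy
    by_cases h1 : z = x
    · subst h1; rw [Equiv.swap_apply_left]; tauto
    by_cases h2 : z = y
    · subst h2; rw [Equiv.swap_apply_right]; tauto
    rw [Equiv.swap_apply_of_ne_of_ne h1 h2]
  refine ⟨hfx, ?_⟩
  have c1 := Finset.card_insert_le y A
  have c2 := Finset.card_insert_le x (insert y A)
  obtain ⟨b, hb⟩ := pick (insert x (insert y A)) (by omega)
  have c3 := Finset.card_insert_le b (insert x (insert y A))
  obtain ⟨c, hc⟩ := pick (insert b (insert x (insert y A))) (by omega)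
  simp only [Finset.mem_insert, not_or] at hb hc
  refine agree hf h0 hA hfx h1 (b := b) (c := c) (fun h => hc.1 h.symm) hb.2.2 hc.2.2.2 ?_ ?_
  · rw [Equiv.Perm.mul_apply, Equiv.swap_apply_of_ne_of_ne hb.1 hb.2.1]
  · rw [Equiv.Perm.mul_apply, Equiv.swap_apply_of_ne_of_ne hc.2.1 hc.2.2.1]

lemma same_fx {M : Finset α} {f : Equiv.Perm α → ℝ} (hf : Cube f) (hM : 7 ≤ M.card)
    (h0 : ∀ σ, (fx M σ).card = 1 ∨ (fx M σ).card = 2 → f σ = 0)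
    {A : Finset α} (hA : A.card = 3) {σ σ' : Equiv.Perm α} (h1 : fx M σ = A) (h2 : fx M σ' = A) :
    f σ = f σ' := by
  have hn : 7 ≤ Fintype.card α := hM.trans (Finset.card_le_univ M)
  have hfix : ∀ {ρ : Equiv.Perm α}, fx M ρ = A → ∀ x ∈ A, ρ x = x :=
    fun h x hx => (mem_fx.1 (h ▸ hx)).2
  have hnf : ∀ {ρ : Equiv.Perm α}, fx M ρ = A → ∀ x, x ∉ A → x ∈ M → ρ x ≠ x :=
    fun h x hx hxM e => hx (h ▸ mem_fx.2 ⟨hxM, e⟩)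
  obtain ⟨q, hqM, hqA⟩ : ∃ q ∈ M, q ∉ A :=
    Finset.exists_mem_notMem_of_card_lt_card (by omega)
  have claim2 : ∀ ρ : Equiv.Perm α, fx M ρ = A → ρ q = σ' q → f ρ = f σ' := by
    intro ρ hρ hq
    obtain ⟨x, hx⟩ := ρ.surjective q
    have hxq : x ≠ q := by rintro rfl; exact hnf hρ x hqA hqM hx
    have hxA : x ∉ A := fun h => hxq ((hfix hρ x h).symm.trans hx)
    by_cases e : ρ x = σ' x
    · exact agree hf h0 hA hρ h2 hxq hxA hqA e hq
    obtain ⟨y, hy⟩ := ρ.surjective (σ' x)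
    have hyx : y ≠ x := by rintro rfl; exact e hy
    have hyA : y ∉ A := by
      intro h
      have := hfix hρ y h
      have h' := hfix h2 y h
      exact hyx (σ'.injective (h'.trans (this.symm.trans hy)))
    have hqy : q ≠ y := by
      rintro rfl
      exact hxq (σ'.injective (hy.symm.trans hq))
    obtain ⟨k1, k2⟩ := swap_step hf hn h0 hA hρ hxA hyA
      (fun hxM => by rw [hy]; exact hnf h2 x hxA hxM) (fun _ => by rw [hx]; exact hqy)
    rw [← k2]
    refine agree hf h0 hA k1 h2 hxq hxA hqA ?_ ?_
    · rw [Equiv.Perm.mul_apply, Equiv.swap_apply_left, hy]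
    · rw [Equiv.Perm.mul_apply, Equiv.swap_apply_of_ne_of_ne hxq.symm hqy, hq]
  by_cases e : σ q = σ' q
  · exact claim2 σ h1 e
  have good : ∀ ρ : Equiv.Perm α, fx M ρ = A → ∀ y, ρ y = σ' q → ρ q ≠ y → f ρ = f σ' := by
    intro ρ hρ y hy hqy
    by_cases hyq : y = q
    · exact claim2 ρ hρ (hyq ▸ hy)
    have hyA : y ∉ A := by
      intro h
      have := hfix hρ y h
      have h' := hfix h2 y h
      exact hyq (σ'.injective (h'.trans (this.symm.trans hy)))
    obtain ⟨k1, k2⟩ := swap_step hf hn h0 hA hρ hqA hyA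
      (fun hxM => by rw [hy]; exact hnf h2 q hqA hqM) (fun _ => hqy)
    rw [← k2]
    refine claim2 _ k1 ?_
    rw [Equiv.Perm.mul_apply, Equiv.swap_apply_left, hy]
  obtain ⟨y, hy⟩ := σ.surjective (σ' q)
  by_cases hqy : σ q = y
  swap
  · exact good σ h1 y hy hqy
  have hyq : y ≠ q := by rintro rfl; exact e hy
  obtain ⟨u, hu⟩ := σ.surjective q
  have c1 := Finset.card_insert_le y A
  have c2 := Finset.card_insert_le q (insert y A)
  have c3 := Finset.card_insert_le u (insert q (insert y A))
  obtain ⟨w, hw⟩ := pick (insert u (insert q (insert y A))) (by omega)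
  simp only [Finset.mem_insert, not_or] at hw
  obtain ⟨k1, k2⟩ := swap_step hf hn h0 hA h1 hqA hw.2.2.2
      (fun hxM h => hw.1 (σ.injective (h.trans hu.symm))) (fun _ h => hw.2.2.1 (h.symm.trans hqy))
  rw [← k2]
  refine good _ k1 y ?_ ?_
  · rw [Equiv.Perm.mul_apply, Equiv.swap_apply_of_ne_of_ne hyq (Ne.symm hw.2.2.1), hy]
  · rw [Equiv.Perm.mul_apply, Equiv.swap_apply_left]
    intro h
    exact hw.2.1 (σ.injective (h.trans hqy.symm))

lemma exists_fx (M D : Finset α) (hD : D ⊆ M) (hc : D.card + 2 ≤ Fintype.card α) :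
    ∃ σ : Equiv.Perm α, fx M σ = D := by
  refine ⟨(Dᶜ).toList.formPerm, ?_⟩
  have hs : ((Dᶜ).toList.formPerm).support = Dᶜ := by
    rw [List.support_formPerm_of_nodup _ (Finset.nodup_toList _), Finset.toList_toFinset]
    intro x hx
    have := congrArg List.length hx
    rw [Finset.length_toList, Finset.card_compl] at this
    simp at this
    omega
  ext x
  have := Finset.ext_iff.1 hs x
  rw [Equiv.Perm.mem_support, Finset.mem_compl] at this
  rw [mem_fx]
  constructor
  · rintro ⟨_, h⟩; by_contra h'; exact this.2 h' h
  · intro h; exact ⟨hD h, by by_contra h'; exact this.1 h' h⟩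

/-- one exchange of a fixed point -/
lemma exchange {M : Finset α} {f : Equiv.Perm α → ℝ} (hf : Cube f) (hM : 7 ≤ M.card)
    (h0 : ∀ σ, (fx M σ).card = 1 ∨ (fx M σ).card = 2 → f σ = 0)
    {a₁ a₂ a₃ a₄ : α} (h12 : a₁ ≠ a₂) (h13 : a₁ ≠ a₃) (h14 : a₁ ≠ a₄) (h23 : a₂ ≠ a₃)
    (h24 : a₂ ≠ a₄) (h34 : a₃ ≠ a₄) (m1 : a₁ ∈ M) (m2 : a₂ ∈ M) (m3 : a₃ ∈ M) (m4 : a₄ ∈ M) :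
    ∃ σ σ' : Equiv.Perm α, fx M σ = {a₁, a₂, a₃} ∧ fx M σ' = {a₁, a₂, a₄} ∧ f σ = f σ' := by
  have hn : 7 ≤ Fintype.card α := hM.trans (Finset.card_le_univ M)
  set D : Finset α := {a₁, a₂, a₃, a₄} with hDdef
  have hDc : D.card = 4 := by
    rw [hDdef, Finset.card_insert_of_notMem (by simp [*]), Finset.card_insert_of_notMem (by simp [*]),
      Finset.card_pair h34]
  have hDM : D ⊆ M := by
    intro x hx; simp [hDdef] at hx; rcases hx with rfl | rfl | rfl | rfl <;> assumption
  obtain ⟨σ, hσ⟩ := exists_fx M D hDM (by omega)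
  obtain ⟨b₁, hb1⟩ := pick D (by omega)
  have c1 := Finset.card_insert_le b₁ D
  obtain ⟨b₂, hb2⟩ := pick (insert b₁ D) (by omega)
  have c2 := Finset.card_insert_le b₂ (insert b₁ D)
  obtain ⟨b₃, hb3⟩ := pick (insert b₂ (insert b₁ D)) (by omega)
  simp only [Finset.mem_insert, not_or] at hb2 hb3
  have mD : a₁ ∈ D ∧ a₂ ∈ D ∧ a₃ ∈ D ∧ a₄ ∈ D := by simp [hDdef]
  have ne : ∀ {a b}, a ∈ D → b ∉ D → a ≠ b := fun ha hb e => hb (e ▸ ha)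
  have main : ∀ a ∈ D, a ≠ a₁ → a ≠ a₂ →
      f σ = f (σ * Equiv.swap a₁ b₁) + f (σ * Equiv.swap a₂ b₂) + f (σ * Equiv.swap a b₃) := by
    intro a haD ha1 ha2
    have C := hf σ (Equiv.swap a₁ b₁) (Equiv.swap a₂ b₂) (Equiv.swap a b₃)
      (swap_disj h12 (ne mD.1 hb2.2) (ne mD.2.1 hb1).symm (Ne.symm hb2.1))
      (swap_disj ha1.symm (ne mD.1 hb3.2.2) (ne haD hb1).symm (Ne.symm hb3.2.1))
      (swap_disj ha2.symm (ne mD.2.1 hb3.2.2) (ne haD hb2.2).symm (Ne.symm hb3.1))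
    have k1 : fx M (σ * Equiv.swap a₁ b₁) = D.erase a₁ := by
      rw [fx_drop (hσ ▸ mD.1) (hσ ▸ hb1), hσ]
    have k2 : fx M (σ * Equiv.swap a₂ b₂) = D.erase a₂ := by
      rw [fx_drop (hσ ▸ mD.2.1) (hσ ▸ hb2.2), hσ]
    have n12 : a₂ ∈ D.erase a₁ := Finset.mem_erase.2 ⟨h12.symm, mD.2.1⟩
    have n13 : a ∈ D.erase a₁ := Finset.mem_erase.2 ⟨ha1, haD⟩
    have n23 : a ∈ D.erase a₂ := Finset.mem_erase.2 ⟨ha2, haD⟩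
    have n123 : a ∈ (D.erase a₁).erase a₂ := Finset.mem_erase.2 ⟨ha2, n13⟩
    have k12 : fx M (σ * Equiv.swap a₁ b₁ * Equiv.swap a₂ b₂) = (D.erase a₁).erase a₂ := by
      rw [fx_drop (k1 ▸ n12) (k1 ▸ fun h => hb2.2 (Finset.mem_of_mem_erase h)), k1]
    have k13 : fx M (σ * Equiv.swap a₁ b₁ * Equiv.swap a b₃) = (D.erase a₁).erase a := by
      rw [fx_drop (k1 ▸ n13) (k1 ▸ fun h => hb3.2.2 (Finset.mem_of_mem_erase h)), k1]
    have k23 : fx M (σ * Equiv.swap a₂ b₂ * Equiv.swap a b₃) = (D.erase a₂).erase a := by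
      rw [fx_drop (k2 ▸ n23) (k2 ▸ fun h => hb3.2.2 (Finset.mem_of_mem_erase h)), k2]
    have k123 : fx M (σ * Equiv.swap a₁ b₁ * Equiv.swap a₂ b₂ * Equiv.swap a b₃)
        = ((D.erase a₁).erase a₂).erase a := by
      rw [fx_drop (k12 ▸ n123) (k12 ▸ fun h => hb3.2.2
        (Finset.mem_of_mem_erase (Finset.mem_of_mem_erase h))), k12]
    have d1 := Finset.card_erase_of_mem mD.1
    have d2 := Finset.card_erase_of_mem mD.2.1
    have d12 := Finset.card_erase_of_mem n12
    have d13 := Finset.card_erase_of_mem n13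
    have d23 := Finset.card_erase_of_mem n23
    have d123 := Finset.card_erase_of_mem n123
    have z12 := h0 _ (Or.inr (show (fx M (σ * Equiv.swap a₁ b₁ * Equiv.swap a₂ b₂)).card = 2 by rw [k12]; omega))
    have z13 := h0 _ (Or.inr (show (fx M (σ * Equiv.swap a₁ b₁ * Equiv.swap a b₃)).card = 2 by rw [k13]; omega))
    have z23 := h0 _ (Or.inr (show (fx M (σ * Equiv.swap a₂ b₂ * Equiv.swap a b₃)).card = 2 by rw [k23]; omega))
    have z123 := h0 _ (Or.inl (show (fx M (σ * Equiv.swap a₁ b₁ * Equiv.swap a₂ b₂ * Equiv.swap a b₃)).card = 1 by rw [k123]; omega))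
    linarith
  refine ⟨σ * Equiv.swap a₄ b₃, σ * Equiv.swap a₃ b₃, ?_, ?_, ?_⟩
  · rw [fx_drop (hσ ▸ mD.2.2.2) (hσ ▸ hb3.2.2), hσ, hDdef]
    ext x; simp only [Finset.mem_erase, Finset.mem_insert, Finset.mem_singleton]
    constructor
    · tauto
    · rintro (rfl | rfl | rfl) <;> simp [*]
  · rw [fx_drop (hσ ▸ mD.2.2.1) (hσ ▸ hb3.2.2), hσ, hDdef]
    ext x; simp only [Finset.mem_erase, Finset.mem_insert, Finset.mem_singleton]
    constructor
    · tauto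
    · rintro (rfl | rfl | rfl) <;> simp [*, Ne.symm]
  · have e3 := main a₃ mD.2.2.1 h13.symm h23.symm
    have e4 := main a₄ mD.2.2.2 h14.symm h24.symm
    linarith

lemma const3 {M : Finset α} {f : Equiv.Perm α → ℝ} (hf : Cube f) (hM : 7 ≤ M.card)
    (h0 : ∀ σ, (fx M σ).card = 1 ∨ (fx M σ).card = 2 → f σ = 0) :
    ∀ k : ℕ, ∀ σ σ' : Equiv.Perm α, (fx M σ).card = 3 → (fx M σ').card = 3 →
      (fx M σ \ fx M σ').card = k → f σ = f σ' := by
  intro k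
  induction k with
  | zero =>
    intro σ σ' h3 h3' h
    have hs : fx M σ ⊆ fx M σ' := Finset.sdiff_eq_empty_iff_subset.1 (Finset.card_eq_zero.1 h)
    have := Finset.eq_of_subset_of_card_le hs (by omega)
    exact same_fx hf hM h0 h3 rfl this.symm
  | succ k ih =>
    intro σ σ' h3 h3' h
    obtain ⟨x, hx⟩ : (fx M σ \ fx M σ').Nonempty := Finset.card_pos.1 (by omega)
    have h' : (fx M σ' \ fx M σ).card = k + 1 := by
      rw [← h]; exact Finset.card_sdiff_comm (by omega)
    obtain ⟨y, hy⟩ : (fx M σ' \ fx M σ).Nonempty := Finset.card_pos.1 (by omega)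
    rw [Finset.mem_sdiff] at hx hy
    have hc2 : ((fx M σ).erase x).card = 2 := by rw [Finset.card_erase_of_mem hx.1]; omega
    obtain ⟨a, b, hab, e⟩ := Finset.card_eq_two.1 hc2
    have ha : a ∈ (fx M σ).erase x := by rw [e]; simp
    have hb : b ∈ (fx M σ).erase x := by rw [e]; simp
    rw [Finset.mem_erase] at ha hb
    have nea : a ≠ y := by rintro rfl; exact hy.2 ha.2
    have neb : b ≠ y := by rintro rfl; exact hy.2 hb.2
    have nex : x ≠ y := by rintro rfl; exact hy.2 hx.1
    obtain ⟨ρ, ρ', r1, r2, r3⟩ := exchange hf hM h0 hab ha.1 nea hb.1 neb nex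
      (mem_fx.1 ha.2).1 (mem_fx.1 hb.2).1 (mem_fx.1 hx.1).1 (mem_fx.1 hy.1).1
    have es : fx M σ = {a, b, x} := by
      rw [← Finset.insert_erase hx.1, e]
      ext z; simp; tauto
    have s1 : f σ = f ρ := same_fx hf hM h0 h3 rfl (r1.trans es.symm)
    rw [s1, r3]
    have hc : (fx M ρ').card = 3 := by
      rw [r2]; exact Finset.card_eq_three.2 ⟨a, b, y, hab, nea, neb, rfl⟩
    refine ih ρ' σ' hc h3' ?_
    have : fx M ρ' \ fx M σ' = (fx M σ \ fx M σ').erase x := by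
      rw [r2, es]
      ext z
      simp only [Finset.mem_sdiff, Finset.mem_erase, Finset.mem_insert, Finset.mem_singleton]
      have := hy.1
      constructor
      · rintro ⟨rfl | rfl | rfl, hz⟩
        · exact ⟨ha.1, by simp, hz⟩
        · exact ⟨hb.1, by simp, hz⟩
        · exact absurd this hz
      · rintro ⟨hzx, (hz | hz | hz), hz'⟩
        · exact ⟨Or.inl hz, hz'⟩
        · exact ⟨Or.inr (Or.inl hz), hz'⟩
        · exact absurd hz hzx
    rw [this, Finset.card_erase_of_mem (Finset.mem_sdiff.2 hx), h]
    rfl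

/-- swapping a fixed point with anything strictly decreases the fixed set -/
lemma fx_swap_lt {M : Finset α} {σ : Equiv.Perm α} {a b : α} (ha : a ∈ fx M σ) (hab : a ≠ b) :
    (fx M (σ * Equiv.swap a b)) ⊆ (fx M σ).erase a := by
  have ha' := mem_fx.1 ha
  intro x
  rw [Finset.mem_erase, mem_fx, mem_fx, Equiv.Perm.mul_apply]
  by_cases h1 : x = a
  · subst h1
    have : σ b ≠ x := fun h => hab (σ.injective (ha'.2.trans h.symm))
    simp [this]
  by_cases h2 : x = b
  · subst h2
    rw [Equiv.swap_apply_right, ha'.2]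
    tauto
  rw [Equiv.swap_apply_of_ne_of_ne h1 h2]
  tauto

lemma big {M : Finset α} {f : Equiv.Perm α → ℝ} (hf : Cube f) (hM : 7 ≤ M.card)
    (h0 : ∀ σ, 1 ≤ (fx M σ).card → (fx M σ).card ≤ 3 → f σ = 0) :
    ∀ k : ℕ, ∀ σ : Equiv.Perm α, 1 ≤ (fx M σ).card → (fx M σ).card = k → f σ = 0 := by
  have hn : 7 ≤ Fintype.card α := hM.trans (Finset.card_le_univ M)
  intro k
  induction k using Nat.strong_induction_on with
  | _ k ih =>
  intro σ h1 hk
  by_cases h3 : k ≤ 3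
  · exact h0 σ h1 (by omega)
  obtain ⟨T, hT, hTc⟩ := Finset.exists_subset_card_eq (show 4 ≤ (fx M σ).card by omega)
  obtain ⟨p, hp⟩ : T.Nonempty := Finset.card_pos.1 (by omega)
  have hc3 : (T.erase p).card = 3 := by rw [Finset.card_erase_of_mem hp]; omega
  obtain ⟨a₁, a₂, a₃, h12, h13, h23, e⟩ := Finset.card_eq_three.1 hc3
  have m1 : a₁ ∈ T.erase p := by rw [e]; simp
  have m2 : a₂ ∈ T.erase p := by rw [e]; simp
  have m3 : a₃ ∈ T.erase p := by rw [e]; simp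
  rw [Finset.mem_erase] at m1 m2 m3
  obtain ⟨b₁, hb1⟩ := pick T (by omega)
  have c1 := Finset.card_insert_le b₁ T
  obtain ⟨b₂, hb2⟩ := pick (insert b₁ T) (by omega)
  have c2 := Finset.card_insert_le b₂ (insert b₁ T)
  obtain ⟨b₃, hb3⟩ := pick (insert b₂ (insert b₁ T)) (by omega)
  simp only [Finset.mem_insert, not_or] at hb2 hb3
  have ne : ∀ {a b}, a ∈ T → b ∉ T → a ≠ b := fun ha hb e => hb (e ▸ ha)
  have C := hf σ (Equiv.swap a₁ b₁) (Equiv.swap a₂ b₂) (Equiv.swap a₃ b₃)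
      (swap_disj h12 (ne m1.2 hb2.2) (ne m2.2 hb1).symm (Ne.symm hb2.1))
      (swap_disj h13 (ne m1.2 hb3.2.2) (ne m3.2 hb1).symm (Ne.symm hb3.2.1))
      (swap_disj h23 (ne m2.2 hb3.2.2) (ne m3.2 hb2.2).symm (Ne.symm hb3.1))
  -- invariant: fixed set is inside that of σ and p stays fixed
  have step : ∀ ρ a b, p ∈ fx M ρ → a ∈ fx M ρ → a ∈ T → a ≠ p → b ∉ T →
      p ∈ fx M (ρ * Equiv.swap a b) ∧ (fx M (ρ * Equiv.swap a b)).card < (fx M ρ).card ∧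
      ∀ c, c ∈ T → c ≠ a → c ∈ fx M ρ → c ∈ fx M (ρ * Equiv.swap a b) := by
    intro ρ a b hpρ ha haT hap hb
    have keep : ∀ c, c ∈ T → c ≠ a → c ∈ fx M ρ → c ∈ fx M (ρ * Equiv.swap a b) := by
      intro c hcT hca hc
      rw [mem_fx] at hc ⊢
      rw [Equiv.Perm.mul_apply, Equiv.swap_apply_of_ne_of_ne hca (ne hcT hb)]
      exact hc
    refine ⟨keep p hp hap.symm hpρ, ?_, keep⟩
    exact lt_of_le_of_lt (Finset.card_le_card (fx_swap_lt ha (ne haT hb)))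
      (Finset.card_erase_lt_of_mem ha)
  have z : ∀ ρ, p ∈ fx M ρ → (fx M ρ).card < k → f ρ = 0 := fun ρ hρ hlt =>
    ih _ hlt ρ (Finset.card_pos.2 ⟨p, hρ⟩) rfl
  obtain ⟨p1, l1, q1⟩ := step σ a₁ b₁ (hT hp) (hT m1.2) m1.2 m1.1 hb1
  obtain ⟨p2, l2, q2⟩ := step σ a₂ b₂ (hT hp) (hT m2.2) m2.2 m2.1 hb2.2
  obtain ⟨p3, l3, q3⟩ := step σ a₃ b₃ (hT hp) (hT m3.2) m3.2 m3.1 hb3.2.2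
  obtain ⟨p12, l12, q12⟩ := step _ a₂ b₂ p1 (q1 a₂ m2.2 h12.symm (hT m2.2)) m2.2 m2.1 hb2.2
  obtain ⟨p13, l13, q13⟩ := step _ a₃ b₃ p1 (q1 a₃ m3.2 h13.symm (hT m3.2)) m3.2 m3.1 hb3.2.2
  obtain ⟨p23, l23, q23⟩ := step _ a₃ b₃ p2 (q2 a₃ m3.2 h23.symm (hT m3.2)) m3.2 m3.1 hb3.2.2
  obtain ⟨p123, l123, q123⟩ := step _ a₃ b₃ p12
    (q12 a₃ m3.2 h23.symm (q1 a₃ m3.2 h13.symm (hT m3.2))) m3.2 m3.1 hb3.2.2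
  rw [z _ p1 (by omega), z _ p2 (by omega), z _ p3 (by omega), z _ p12 (by omega),
    z _ p13 (by omega), z _ p23 (by omega), z _ p123 (by omega)] at C
  linarith

lemma zero_case {M : Finset α} {f : Equiv.Perm α → ℝ} (hf : Cube f) (hM : 7 ≤ M.card)
    (h0 : ∀ σ, 1 ≤ (fx M σ).card → f σ = 0) (σ : Equiv.Perm α) : f σ = 0 := by
  by_cases hpos : 1 ≤ (fx M σ).card
  · exact h0 σ hpos
  -- edges a — σ⁻¹ a
  have three : ∀ x y z : α, ({x, y, z} : Finset α).card ≤ 3 := fun x y z => Finset.card_le_three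
  obtain ⟨a₁, m1⟩ : M.Nonempty := Finset.card_pos.1 (by omega)
  obtain ⟨a₂, m2, n2⟩ : ∃ a ∈ M, a ∉ ({a₁, σ⁻¹ a₁, σ a₁} : Finset α) :=
    Finset.exists_mem_notMem_of_card_lt_card (by have := three a₁ (σ⁻¹ a₁) (σ a₁); omega)
  obtain ⟨a₃, m3, n3⟩ : ∃ a ∈ M, a ∉ ({a₁, σ⁻¹ a₁, σ a₁} ∪ {a₂, σ⁻¹ a₂, σ a₂} : Finset α) :=
    Finset.exists_mem_notMem_of_card_lt_card (by
      have := three a₁ (σ⁻¹ a₁) (σ a₁)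
      have := three a₂ (σ⁻¹ a₂) (σ a₂)
      have := Finset.card_union_le ({a₁, σ⁻¹ a₁, σ a₁} : Finset α) {a₂, σ⁻¹ a₂, σ a₂}
      omega)
  simp only [Finset.mem_union, Finset.mem_insert, Finset.mem_singleton, not_or] at n2 n3
  obtain ⟨⟨n31, n31', n31''⟩, n32, n32', n32''⟩ := n3
  obtain ⟨n21, n21', n21''⟩ := n2
  have inv_ne : ∀ {a b : α}, b ≠ σ a → a ≠ σ⁻¹ b := by
    intro a b h e; exact h (by rw [e]; simp)
  have dj : ∀ {a b : α}, b ≠ a → b ≠ σ⁻¹ a → b ≠ σ a →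
      (Equiv.swap a (σ⁻¹ a)).Disjoint (Equiv.swap b (σ⁻¹ b)) := by
    intro a b h1 h2 h3
    exact swap_disj h1.symm (inv_ne h3) h2.symm (fun e => h1 (σ⁻¹.injective e).symm)
  have d12 := dj n21 n21' n21''
  have d13 := dj n31 n31' n31''
  have d23 := dj n32 n32' n32''
  have C := hf σ _ _ _ d12 d13 d23
  have fixed : ∀ (ρ : Equiv.Perm α) (a : α), a ∈ M → ρ a = a → f ρ = 0 := fun ρ a ha h =>
    h0 ρ (Finset.card_pos.2 ⟨a, mem_fx.2 ⟨ha, h⟩⟩)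
  have s : ∀ a, (σ * Equiv.swap a (σ⁻¹ a)) a = a := by
    intro a; rw [Equiv.Perm.mul_apply, Equiv.swap_apply_left]; simp
  have f12 : Equiv.swap a₂ (σ⁻¹ a₂) a₁ = a₁ :=
    Equiv.swap_apply_of_ne_of_ne (Ne.symm n21) (inv_ne n21'')
  have f13 : Equiv.swap a₃ (σ⁻¹ a₃) a₁ = a₁ :=
    Equiv.swap_apply_of_ne_of_ne (Ne.symm n31) (inv_ne n31'')
  have f23 : Equiv.swap a₃ (σ⁻¹ a₃) a₂ = a₂ :=
    Equiv.swap_apply_of_ne_of_ne (Ne.symm n32) (inv_ne n32'')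
  rw [fixed _ a₁ m1 (s a₁), fixed _ a₂ m2 (s a₂), fixed _ a₃ m3 (s a₃),
    fixed (σ * Equiv.swap a₁ (σ⁻¹ a₁) * Equiv.swap a₂ (σ⁻¹ a₂)) a₁ m1
      (by rw [Equiv.Perm.mul_apply, f12, s]),
    fixed (σ * Equiv.swap a₁ (σ⁻¹ a₁) * Equiv.swap a₃ (σ⁻¹ a₃)) a₁ m1
      (by rw [Equiv.Perm.mul_apply, f13, s]),
    fixed (σ * Equiv.swap a₂ (σ⁻¹ a₂) * Equiv.swap a₃ (σ⁻¹ a₃)) a₂ m2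
      (by rw [Equiv.Perm.mul_apply, f23, s]),
    fixed (σ * Equiv.swap a₁ (σ⁻¹ a₁) * Equiv.swap a₂ (σ⁻¹ a₂) * Equiv.swap a₃ (σ⁻¹ a₃)) a₁ m1
      (by rw [Equiv.Perm.mul_apply, f13, Equiv.Perm.mul_apply, f12, s])] at C
  linarith

lemma main_fn {M : Finset α} {f : Equiv.Perm α → ℝ} (hf : Cube f) (hM : 7 ≤ M.card)
    (h0 : ∀ σ, (fx M σ).card = 1 ∨ (fx M σ).card = 2 → f σ = 0)
    (τ : Equiv.Perm α) (hτ : (fx M τ).card = 0) (hτ0 : f τ = 0) (σ : Equiv.Perm α) : f σ = 0 := by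
  obtain ⟨c, hc⟩ : ∃ c : ℝ, ∀ ρ, (fx M ρ).card = 3 → f ρ = c := by
    by_cases h : ∃ ρ, (fx M ρ).card = 3
    · obtain ⟨ρ, hρ⟩ := h
      exact ⟨f ρ, fun ρ' h' => const3 hf hM h0 _ ρ' ρ h' hρ rfl⟩
    · exact ⟨0, fun ρ hρ => absurd ⟨ρ, hρ⟩ h⟩
  have hg := cube_corr M f hf c
  have hz := zero_case hg hM (fun ρ hρ => big hg hM (fun ρ h1 h3 => by
    obtain h | h | h : (fx M ρ).card = 1 ∨ (fx M ρ).card = 2 ∨ (fx M ρ).card = 3 := by omega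
    · rw [h0 ρ (Or.inl h), h]; norm_num
    · rw [h0 ρ (Or.inr h), h]; norm_num
    · rw [hc ρ h, h]; norm_num) _ ρ hρ rfl)
  have h1 := hz τ
  have h2 := hz σ
  rw [hτ0, hτ] at h1
  have hc0 : c = 0 := by norm_num at h1; exact h1
  rw [hc0] at h2
  linarith

end

theorem stmt8 {n m : ℕ} (hmn : m ≤ n) (hm : 7 ≤ m) (hn : 7 ≤ n)
    (i j : Fin m → Fin n) (hi : Function.Injective i) (hj : Function.Injective j)
    (σstar : Equiv.Perm (Fin n)) (hσstar : σstar ∈ Sk i j 0)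
    (σ : Equiv.Perm (Fin n)) :
    permMat2 σ ∈
      Submodule.span ℝ (permMat2 '' (Sk i j 1 ∪ Sk i j 2) ∪ {permMat2 σstar}) := by
  obtain ⟨π, hπ⟩ : ∃ π : Equiv.Perm (Fin n), ∀ r, π (i r) = j r := by
    let e : {x // x ∈ Set.range i} ≃ {x // x ∈ Set.range j} :=
      (Equiv.ofInjective i hi).symm.trans (Equiv.ofInjective j hj)
    refine ⟨e.extendSubtype, fun r => ?_⟩
    rw [Equiv.extendSubtype_apply_of_mem e (i r) ⟨r, rfl⟩]
    simp [e]
  set M : Finset (Fin n) := Finset.univ.image i with hMdef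
  have hM : 7 ≤ M.card := by
    rw [hMdef, Finset.card_image_of_injective _ hi]; simpa using hm
  have hcard : ∀ ρ : Equiv.Perm (Fin n),
      (Finset.univ.filter (fun r : Fin m => (π * ρ) (i r) = j r)).card = (fx M ρ).card := by
    intro ρ
    rw [← Finset.card_image_of_injective _ hi]
    congr 1
    ext x
    simp only [Finset.mem_image, Finset.mem_filter, Finset.mem_univ, true_and, mem_fx, hMdef,
      Equiv.Perm.mul_apply, ← hπ, EmbeddingLike.apply_eq_iff_eq]
    constructor
    · rintro ⟨r, h, rfl⟩; exact ⟨⟨r, rfl⟩, h⟩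
    · rintro ⟨⟨r, rfl⟩, h⟩; exact ⟨r, h, rfl⟩
  by_contra hnot
  obtain ⟨L, hL1, hL2⟩ := Submodule.exists_le_ker_of_notMem hnot
  apply hL1
  have hLW : ∀ ρ, ρ ∈ Sk i j 1 ∪ Sk i j 2 ∨ ρ = σstar → L (permMat2 ρ) = 0 := by
    intro ρ hρ
    refine hL2 (Submodule.subset_span ?_)
    rcases hρ with h | rfl
    · exact Or.inl ⟨ρ, h, rfl⟩
    · exact Or.inr rfl
  have hcube : Cube (fun ρ : Equiv.Perm (Fin n) => L (permMat2 (π * ρ))) := by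
    intro ρ g₁ g₂ g₃ h12 h13 h23
    simp only [← map_sub, ← map_add]
    convert map_zero L
    simp only [← mul_assoc]
    funext p q
    have := cube_mono p.1 p.2 q.1 q.2 (π * ρ) g₁ g₂ g₃ h12 h13 h23
    exact this
  have key := main_fn hcube hM (fun ρ hρ => hLW _ (Or.inl (by
      rcases hρ with h | h
      · exact Or.inl ((hcard ρ).trans h)
      · exact Or.inr ((hcard ρ).trans h)))) (π⁻¹ * σstar)
    (by rw [← hcard, mul_inv_cancel_left]; exact hσstar)
    (hLW _ (Or.inr (by group))) (π⁻¹ * σ)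
  simpa using key
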